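/- Let α > 0, β > 0, L = 2π/α, and M ≥ 1. Let V : ℝ → Matrix(M, M, ℂ) be continuous and L-periodic with V(x) Hermitian and positive semidefinite for every x. Suppose φ_1, …, φ_N : ℝ → ℂ^M are C² functions, L-periodic, orthonormal in L²((0, L); ℂ^M), and for each n there is λ_n > 0 such that −φ_n''(x) + α² β φ_n(x) − V(x) φ_n(x) = −λ_n φ_n(x) for all x. Then ∑_{n=1}^N λ_n ≤ (2/(3√3)) · K₁(β) · ∫_0^L Tr[V(x)^{3/2}] dx. -/

import Mathlib

open Real MeasureTheory ComplexOrder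

/-- The sharp constant `K₁(β) = sup_{λ>0} √λ · coth(π√(β+λ)) / √(β+λ)`. -/
noncomputable def K1 (β : ℝ) : ℝ :=
  ⨆ l : Set.Ioi (0 : ℝ),
    Real.sqrt l * (Real.cosh (π * Real.sqrt (β + l)) / Real.sinh (π * Real.sqrt (β + l))) /
      Real.sqrt (β + l)


section cont
open scoped Matrix.Norms.L2Operator

theorem aux_cont {M : ℕ} (V : ℝ → Matrix (Fin M) (Fin M) ℂ) (hVc : Continuous V)
    (hV : ∀ x, (V x).PosSemidef) :
    Continuous (fun x => ∑ i, (hV x).1.eigenvalues i ^ (3 / 2 : ℝ)) := by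
  have h1 : Continuous (fun x => cfc (fun t : ℝ => t ^ (3/2:ℝ)) (V x)) := by
    refine Continuous.cfc_of_mem_nhdsSet (s := Set.univ) (fun t : ℝ => t ^ (3/2:ℝ)) Filter.univ_mem
      hVc (fun x => (hV x).1.isSelfAdjoint) ?_
    exact (Real.continuous_rpow_const (by norm_num)).continuousOn
  have h2 : Continuous (fun x => (Matrix.trace (cfc (fun t : ℝ => t ^ (3/2:ℝ)) (V x))).re) :=
    Complex.continuous_re.comp h1.matrix_trace
  convert h2 using 2 with x
  rw [(hV x).1.cfc_eq]
  unfold Matrix.IsHermitian.cfc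
  rw [Unitary.conjStarAlgAut_apply, Matrix.trace_mul_cycle, Unitary.coe_star_mul_self, one_mul,
    Matrix.trace_diagonal]
  simp
end cont

theorem aux_diag {M : ℕ} (A : Matrix (Fin M) (Fin M) ℂ) (hA : A.IsHermitian) :
    ∃ W : Matrix (Fin M) (Fin M) ℂ, W.conjTranspose * W = 1 ∧ W * W.conjTranspose = 1 ∧
      A = W * Matrix.diagonal (fun i => (hA.eigenvalues i : ℂ)) * W.conjTranspose := by
  refine ⟨hA.eigenvectorUnitary, ?_, ?_, ?_⟩
  · exact Unitary.coe_star_mul_self _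
  · exact Unitary.coe_mul_star_self _
  · conv_lhs => rw [hA.spectral_theorem, Unitary.conjStarAlgAut_apply]
    rfl

theorem aux_sup0 (f f' : ℝ → ℂ) (hf : ∀ x, HasDerivAt f (f' x) x) (hf' : Continuous f') (L κ y : ℝ)
    (hL : 0 < L) (hp : Function.Periodic f L)  :
    2 * κ * (Real.sinh (κ * L / 2) / Real.cosh (κ * L / 2)) * ‖f y‖ ^ 2 ≤
      ∫ x in y..(y+L), (‖f' x‖ ^ 2 + κ ^ 2 * ‖f x‖ ^ 2) := by
  have hfc : Continuous f := continuous_iff_continuousAt.2 fun x => (hf x).continuousAt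
  set c := y + L / 2 with hc
  let w : ℝ → ℝ := fun x => Real.sinh (κ * (x - c)) / Real.cosh (κ * (x - c))
  have hw : ∀ x, HasDerivAt w (κ * (1 - w x ^ 2)) x := by
    intro x
    have h0 : HasDerivAt (fun x => κ * (x - c)) κ x := by
      simpa using ((hasDerivAt_id x).sub_const c).const_mul κ
    have h1 : HasDerivAt w _ x := h0.sinh.div h0.cosh (Real.cosh_pos _).ne'
    refine h1.congr_deriv ?_
    symm
    have := (Real.cosh_pos (κ * (x - c))).ne'
    change κ * (1 - (Real.sinh (κ * (x - c)) / Real.cosh (κ * (x - c))) ^ 2) = _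
    field_simp
  have hn : ∀ x, HasDerivAt (fun x => ‖f x‖ ^ 2) (2 * ((f x).re * (f' x).re + (f x).im * (f' x).im)) x := by
    intro x
    have := (hf x).norm_sq
    convert this using 1
    simp [Complex.inner]
    ring
  have hg : ∀ x, HasDerivAt (fun x => κ * w x * ‖f x‖ ^ 2)
      (κ * (κ * (1 - w x ^ 2)) * ‖f x‖ ^ 2 + κ * w x * (2 * ((f x).re * (f' x).re + (f x).im * (f' x).im))) x := by
    intro x
    exact ((hw x).const_mul κ).mul (hn x)
  have key := intervalIntegral.sub_le_integral_of_hasDeriv_right_of_le (a := y) (b := y + L)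
    (φ := fun x => ‖f' x‖ ^ 2 + κ ^ 2 * ‖f x‖ ^ 2) (by linarith)
    (fun x _ => (hg x).continuousAt.continuousWithinAt) (fun x _ => (hg x).hasDerivWithinAt)
    (Continuous.integrableOn_Icc (by fun_prop)) (by
      intro x _
      simp only [← Complex.normSq_eq_norm_sq, Complex.normSq_apply]
      nlinarith [sq_nonneg ((f' x).re - κ * w x * (f x).re), sq_nonneg ((f' x).im - κ * w x * (f x).im)])
  refine le_trans (le_of_eq ?_) key
  have e1 : κ * (y + L - c) = κ * L / 2 := by rw [hc]; ring
  have e2 : κ * (y - c) = -(κ * L / 2) := by rw [hc]; ring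
  simp only [w, hp y, e1, e2, Real.sinh_neg, Real.cosh_neg]
  ring

theorem aux_K1 (β : ℝ) (hβ : 0 < β) (l : ℝ) (hl : 0 < l) :
    Real.sqrt l * (Real.cosh (π * Real.sqrt (β + l)) / Real.sinh (π * Real.sqrt (β + l))) /
      Real.sqrt (β + l) ≤ K1 β := by
  refine le_ciSup (f := fun l : Set.Ioi (0 : ℝ) => 
    Real.sqrt l * (Real.cosh (π * Real.sqrt (β + l)) / Real.sinh (π * Real.sqrt (β + l))) /
      Real.sqrt (β + l)) ?_ ⟨l, hl⟩
  have hs : 0 < Real.sinh (π * Real.sqrt β) := Real.sinh_pos_iff.2 (by positivity)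
  refine ⟨1 + 1 / Real.sinh (π * Real.sqrt β), ?_⟩
  rintro _ ⟨⟨m, hm⟩, rfl⟩
  have hm : 0 < m := hm
  simp only
  have h1 : Real.sqrt m ≤ Real.sqrt (β + m) := Real.sqrt_le_sqrt (by linarith)
  have h2 : Real.sinh (π * Real.sqrt β) ≤ Real.sinh (π * Real.sqrt (β + m)) :=
    Real.sinh_le_sinh.2 (mul_le_mul_of_nonneg_left (Real.sqrt_le_sqrt (by linarith)) pi_pos.le)
  set t := π * Real.sqrt (β + m)
  have hst : 0 < Real.sinh t := lt_of_lt_of_le hs h2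
  have h3 : Real.cosh t ≤ Real.sinh t + 1 := by
    have := Real.cosh_sq t
    nlinarith [Real.cosh_pos t]
  have h4 : Real.cosh t / Real.sinh t ≤ 1 + 1 / Real.sinh (π * Real.sqrt β) := by
    calc _ ≤ (Real.sinh t + 1) / Real.sinh t := by gcongr
      _ = 1 + 1 / Real.sinh t := by field_simp
      _ ≤ _ := by gcongr
  have h5 : 0 < Real.sqrt (β + m) := Real.sqrt_pos.2 (by linarith)
  rw [div_le_iff₀ h5, mul_comm]
  gcongr
  
theorem aux_K1_pos (β : ℝ) (hβ : 0 < β) : 0 < K1 β := by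
  refine lt_of_lt_of_le ?_ (aux_K1 β hβ 1 one_pos)
  have h5 : 0 < Real.sqrt (β + 1) := Real.sqrt_pos.2 (by linarith)
  have := Real.sinh_pos_iff.2 (mul_pos pi_pos h5)
  have := Real.cosh_pos (π * Real.sqrt (β + 1))
  have := Real.sqrt_pos.2 (one_pos (α := ℝ))
  positivity

theorem aux_sup (α β : ℝ) (hα : 0 < α) (hβ : 0 < β) (L : ℝ) (hL : L = 2 * π / α)
    (f f' : ℝ → ℂ) (hf : ∀ x, HasDerivAt f (f' x) x) (hf' : Continuous f') (y : ℝ)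
    (hp : Function.Periodic f L) (hp' : Function.Periodic f' L) (s : ℝ) (hs : 0 < s) :
    2 * s * ‖f y‖ ^ 2 ≤ 
      K1 β * ∫ x in (0:ℝ)..L, (‖f' x‖ ^ 2 + (α ^ 2 * β + s ^ 2) * ‖f x‖ ^ 2) := by
  have hLp : 0 < L := by rw [hL]; positivity
  have hl : 0 < s ^ 2 / α ^ 2 := by positivity
  set r := Real.sqrt (β + s ^ 2 / α ^ 2) with hr
  have hr0 : 0 < r := Real.sqrt_pos.2 (by positivity)
  have hr2 : r ^ 2 = β + s ^ 2 / α ^ 2 := Real.sq_sqrt (by positivity)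
  have hk := aux_K1 β hβ _ hl
  rw [← hr] at hk
  have h0 := aux_sup0 f f' hf hf' L (α * r) y hLp hp
  have e1 : α * r * L / 2 = π * r := by rw [hL]; field_simp
  have e2 : (α * r) ^ 2 = α ^ 2 * β + s ^ 2 := by rw [mul_pow, hr2]; field_simp
  rw [e1, e2] at h0
  have hper : Function.Periodic (fun x => ‖f' x‖ ^ 2 + (α ^ 2 * β + s ^ 2) * ‖f x‖ ^ 2) L := by
    intro x; simp only [hp x, hp' x]
  have e3 := hper.intervalIntegral_add_eq y 0
  rw [zero_add] at e3
  rw [e3] at h0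
  set I := ∫ x in (0:ℝ)..L, (‖f' x‖ ^ 2 + (α ^ 2 * β + s ^ 2) * ‖f x‖ ^ 2)
  have e4 : Real.sqrt (s ^ 2 / α ^ 2) = s / α := by
    rw [← div_pow, Real.sqrt_sq (by positivity)]
  rw [e4] at hk
  have hS := Real.sinh_pos_iff.2 (mul_pos pi_pos hr0)
  have hC := Real.cosh_pos (π * r)
  have hI : 0 ≤ I := le_trans (by positivity) h0
  calc 2 * s * ‖f y‖ ^ 2 = (s / α * (Real.cosh (π * r) / Real.sinh (π * r)) / r) * 
        (2 * (α * r) * (Real.sinh (π * r) / Real.cosh (π * r)) * ‖f y‖ ^ 2) := by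
        field_simp
    _ ≤ (s / α * (Real.cosh (π * r) / Real.sinh (π * r)) / r) * I := by gcongr
    _ ≤ _ := by gcongr

theorem aux_scalar (K v u A : ℝ) (hK : 0 < K) (hv : 0 ≤ v) (hA : 0 ≤ A)
    (h : ∀ s : ℝ, 0 < s → 2 * s * u ^ 2 ≤ K * (A + s ^ 2 * u)) :
    v * u ≤ 2 / (3 * Real.sqrt 3) * K * v ^ (3/2:ℝ) + A := by
  rcases hv.eq_or_lt with rfl | hv
  · rw [Real.zero_rpow (by norm_num)]; simpa using hA
  have h3 : 0 < Real.sqrt 3 := by positivity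
  have h33 : Real.sqrt 3 ^ 2 = 3 := Real.sq_sqrt (by norm_num)
  set s := Real.sqrt v / Real.sqrt 3 with hs
  have hs0 : 0 < s := by positivity
  have hsv : Real.sqrt v = Real.sqrt 3 * s := by rw [hs]; field_simp
  have hv2 : v = 3 * s ^ 2 := by
    rw [← h33, ← mul_pow, ← hsv, Real.sq_sqrt hv.le]
  have e : v ^ (3/2:ℝ) = Real.sqrt v ^ 3 := by
    rw [Real.sqrt_eq_rpow, ← Real.rpow_natCast, ← Real.rpow_mul hv.le]; norm_num
  have e2 : 2 / (3 * Real.sqrt 3) * K * v ^ (3/2:ℝ) = 2 * K * s ^ 3 := by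
    rw [e, hsv]; field_simp; rw [h33]
  rw [e2, hv2]
  have := h s hs0
  have hq := mul_nonneg hs0.le (sq_nonneg (K * s - u))
  refine le_of_mul_le_mul_left ?_ hK
  nlinarith

theorem aux_quad {M N : ℕ} (g : Fin N → Fin M → ℝ → ℂ) (hg : ∀ n j, Continuous (g n j))
    (ξ : Fin N → ℂ) (L : ℝ) :
    ((∑ j, ∫ x in (0:ℝ)..L, ‖∑ n, ξ n * g n j x‖ ^ 2 : ℝ) : ℂ) =
      ∑ m, ∑ n, ξ m * (starRingEnd ℂ) (ξ n) *
        ∫ x in (0:ℝ)..L, ∑ j, g m j x * (starRingEnd ℂ) (g n j x) := by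
  have hc : ∀ n j, Continuous (fun x => (starRingEnd ℂ) (g n j x)) :=
    fun n j => Complex.continuous_conj.comp (hg n j)
  simp_rw [← intervalIntegral.integral_const_mul]
  rw [Complex.ofReal_sum]
  simp_rw [← intervalIntegral.integral_ofReal]
  rw [← intervalIntegral.integral_finsetSum]
  · have : ∀ m, (∑ n, ∫ x in (0:ℝ)..L, ξ m * (starRingEnd ℂ) (ξ n) *
        ∑ j, g m j x * (starRingEnd ℂ) (g n j x)) = ∫ x in (0:ℝ)..L, ∑ n, ξ m * (starRingEnd ℂ) (ξ n) *
        ∑ j, g m j x * (starRingEnd ℂ) (g n j x) := by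
      intro m
      rw [← intervalIntegral.integral_finsetSum]
      intro n _
      apply Continuous.intervalIntegrable
      fun_prop
    simp_rw [this]
    rw [← intervalIntegral.integral_finsetSum]
    · congr 1
      ext x
      have : ∀ j, (((‖∑ n, ξ n * g n j x‖ ^ 2 : ℝ)) : ℂ) =
          ∑ m, ∑ n, ξ m * (starRingEnd ℂ) (ξ n) * (g m j x * (starRingEnd ℂ) (g n j x)) := by
        intro j
        rw [Complex.ofReal_pow, ← Complex.mul_conj', map_sum, Finset.sum_mul_sum]
        refine Finset.sum_congr rfl fun m _ => Finset.sum_congr rfl fun n _ => ?_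
        rw [map_mul]; ring
      simp_rw [this, Finset.mul_sum]
      rw [Finset.sum_comm]
      refine Finset.sum_congr rfl fun m _ => ?_
      rw [Finset.sum_comm]
    · intro m _
      apply Continuous.intervalIntegrable
      fun_prop
  · intro j _
    apply Continuous.intervalIntegrable
    fun_prop

theorem aux_A (α β : ℝ) (hα : 0 < α) (hβ : 0 < β) (L : ℝ) (hL : L = 2 * π / α)
    {M N : ℕ} (g d : Fin N → Fin M → ℝ → ℂ) (hg : ∀ n j x, HasDerivAt (g n j) (d n j x) x)
    (hd : ∀ n j, Continuous (d n j))
    (hgp : ∀ n j, Function.Periodic (g n j) L) (hdp : ∀ n j, Function.Periodic (d n j) L)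
    (hortho : ∀ n m, (∫ x in (0:ℝ)..L, ∑ j, g n j x * (starRingEnd ℂ) (g m j x)) =
      if n = m then 1 else 0)
    (e : Fin M → ℂ) (he : ∑ j, ‖e j‖ ^ 2 = 1) (y : ℝ) (c : Fin N → ℂ)
    (hc : ∀ n, c n = ∑ j, (starRingEnd ℂ) (e j) * g n j y) (s : ℝ) (hs : 0 < s) :
    2 * s * (∑ n, ‖c n‖ ^ 2) ^ 2 ≤ K1 β *
      ((∑ j, (∫ x in (0:ℝ)..L, ‖∑ n, (starRingEnd ℂ) (c n) * d n j x‖ ^ 2) +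
        α ^ 2 * β * ∑ n, ‖c n‖ ^ 2) + s ^ 2 * ∑ n, ‖c n‖ ^ 2) := by
  have hgc : ∀ n j, Continuous (g n j) := fun n j =>
    continuous_iff_continuousAt.2 fun x => (hg n j x).continuousAt
  set u := ∑ n, ‖c n‖ ^ 2 with hu
  have hK := aux_K1_pos β hβ
  have h1 : ∑ j, (∫ x in (0:ℝ)..L, ‖∑ n, (starRingEnd ℂ) (c n) * g n j x‖ ^ 2) = u := by
    have := aux_quad g hgc (fun n => (starRingEnd ℂ) (c n)) L
    simp_rw [hortho] at this
    apply Complex.ofReal_injective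
    rw [this]
    simp only [mul_ite, mul_one, mul_zero, Finset.sum_ite_eq, Finset.mem_univ, if_true]
    rw [hu, Complex.ofReal_sum]
    refine Finset.sum_congr rfl fun n _ => ?_
    rw [Complex.mul_conj']; simp
  have h2 : ∀ j, 2 * s * ‖∑ n, (starRingEnd ℂ) (c n) * g n j y‖ ^ 2 ≤ K1 β *
      ((∫ x in (0:ℝ)..L, ‖∑ n, (starRingEnd ℂ) (c n) * d n j x‖ ^ 2) +
        (α ^ 2 * β + s ^ 2) * ∫ x in (0:ℝ)..L, ‖∑ n, (starRingEnd ℂ) (c n) * g n j x‖ ^ 2) := by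
    intro j
    have := aux_sup α β hα hβ L hL (fun x => ∑ n, (starRingEnd ℂ) (c n) * g n j x)
      (fun x => ∑ n, (starRingEnd ℂ) (c n) * d n j x)
      (fun x => HasDerivAt.fun_sum fun n _ => (hg n j x).const_mul _) (by fun_prop) y
      (fun x => by simp only [hgp _ _ x]) (fun x => by simp only [hdp _ _ x]) s hs
    rwa [intervalIntegral.integral_add, intervalIntegral.integral_const_mul] at this
    all_goals
      apply Continuous.intervalIntegrable
      fun_prop
  have h3 := Finset.sum_le_sum (s := Finset.univ) fun j _ => h2 j
  rw [← Finset.mul_sum, ← Finset.mul_sum, Finset.sum_add_distrib, ← Finset.mul_sum, h1] at h3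
  have h4 : u ^ 2 ≤ ∑ j, ‖∑ n, (starRingEnd ℂ) (c n) * g n j y‖ ^ 2 := by
    have e1 : (u : ℂ) = ∑ j, (starRingEnd ℂ) (e j) * ∑ n, (starRingEnd ℂ) (c n) * g n j y := by
      simp_rw [Finset.mul_sum]
      rw [Finset.sum_comm, hu, Complex.ofReal_sum]
      refine Finset.sum_congr rfl fun n _ => ?_
      rw [Complex.ofReal_pow, ← Complex.conj_mul']
      nth_rewrite 2 [hc]
      rw [Finset.mul_sum]
      refine Finset.sum_congr rfl fun j _ => ?_
      ring
    have hu0 : 0 ≤ u := Finset.sum_nonneg fun n _ => by positivity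
    have e2 : u ≤ ∑ j, ‖e j‖ * ‖∑ n, (starRingEnd ℂ) (c n) * g n j y‖ := by
      calc u = ‖(u:ℂ)‖ := by simp [abs_of_nonneg hu0]
        _ ≤ _ := by
          rw [e1]
          refine (norm_sum_le _ _).trans (le_of_eq ?_)
          simp
    calc u ^ 2 ≤ (∑ j, ‖e j‖ * ‖∑ n, (starRingEnd ℂ) (c n) * g n j y‖) ^ 2 := by gcongr
      _ ≤ _ := Finset.sum_mul_sq_le_sq_mul_sq _ _ _
      _ = _ := by rw [he, one_mul]
  calc 2 * s * u ^ 2 ≤ 2 * s * ∑ j, ‖∑ n, (starRingEnd ℂ) (c n) * g n j y‖ ^ 2 := by gcongr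
    _ ≤ _ := h3
    _ = _ := by ring

theorem aux_pt (α β : ℝ) (hα : 0 < α) (hβ : 0 < β) (L : ℝ) (hL : L = 2 * π / α)
    {M N : ℕ} (g d : Fin N → Fin M → ℝ → ℂ) (hg : ∀ n j x, HasDerivAt (g n j) (d n j x) x)
    (hd : ∀ n j, Continuous (d n j))
    (hgp : ∀ n j, Function.Periodic (g n j) L) (hdp : ∀ n j, Function.Periodic (d n j) L)
    (hortho : ∀ n m, (∫ x in (0:ℝ)..L, ∑ j, g n j x * (starRingEnd ℂ) (g m j x)) =
      if n = m then 1 else 0) (A : Matrix (Fin M) (Fin M) ℂ) (hA : A.PosSemidef) (y : ℝ) :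
    ∑ n, (∑ j, A.mulVec (fun j => g n j y) j * (starRingEnd ℂ) (g n j y)).re ≤
      2 / (3 * Real.sqrt 3) * K1 β * ∑ i, hA.1.eigenvalues i ^ (3/2:ℝ) +
      ((∑ m, ∑ n, (∑ j, (starRingEnd ℂ) (g m j y) * g n j y) *
        ∫ x in (0:ℝ)..L, ∑ j, d m j x * (starRingEnd ℂ) (d n j x)).re +
        α ^ 2 * β * ∑ n, (∑ j, g n j y * (starRingEnd ℂ) (g n j y)).re) := by
  obtain ⟨W, hW1, hW2, hWA⟩ := aux_diag A hA.1
  set v := hA.1.eigenvalues with hv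
  have hv0 : ∀ i, 0 ≤ v i := hA.eigenvalues_nonneg
  let c : Fin M → Fin N → ℂ := fun i n => ∑ j, (starRingEnd ℂ) (W j i) * g n j y
  have hcW : ∀ n, (fun i => c i n) = W.conjTranspose.mulVec (fun j => g n j y) := by
    intro n; ext i
    simp [c, Matrix.mulVec, dotProduct, Matrix.conjTranspose_apply]
  -- Parseval
  have hP : ∀ m n, ∑ i, (starRingEnd ℂ) (c i m) * c i n = ∑ j, (starRingEnd ℂ) (g m j y) * g n j y := by
    intro m n
    have : star (fun i => c i m) ⬝ᵥ (fun i => c i n) = star (fun j => g m j y) ⬝ᵥ (fun j => g n j y) := by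
      rw [hcW, hcW, Matrix.star_mulVec, Matrix.conjTranspose_conjTranspose,
        ← Matrix.dotProduct_mulVec, Matrix.mulVec_mulVec, hW2, Matrix.one_mulVec]
    simpa [dotProduct] using this
  have hQ : ∀ n, (∑ j, A.mulVec (fun j => g n j y) j * (starRingEnd ℂ) (g n j y)) =
      ∑ i, (v i : ℂ) * (‖c i n‖ ^ 2 : ℝ) := by
    intro n
    have : star (fun j => g n j y) ⬝ᵥ A.mulVec (fun j => g n j y) =
        star (fun i => c i n) ⬝ᵥ (Matrix.diagonal (fun i => (v i : ℂ))).mulVec (fun i => c i n) := by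
      rw [hcW, Matrix.star_mulVec, Matrix.conjTranspose_conjTranspose,
        ← Matrix.dotProduct_mulVec, Matrix.mulVec_mulVec, Matrix.mulVec_mulVec, ← hWA]
    simp only [dotProduct, Pi.star_apply, Matrix.mulVec_diagonal, RCLike.star_def] at this
    rw [Finset.sum_congr rfl fun j _ => mul_comm _ _, this]
    refine Finset.sum_congr rfl fun i _ => ?_
    rw [Complex.ofReal_pow, ← Complex.conj_mul']
    ring
  have hu : ∀ i, ∑ j, ‖W j i‖ ^ 2 = 1 := by
    intro i
    have := congrFun (congrFun hW1 i) i
    rw [Matrix.mul_apply, Matrix.one_apply_eq] at this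
    apply Complex.ofReal_injective
    rw [Complex.ofReal_sum, Complex.ofReal_one, ← this]
    refine Finset.sum_congr rfl fun j _ => ?_
    rw [Complex.ofReal_pow, ← Complex.conj_mul']
    rfl
  have key : ∀ i, v i * ∑ n, ‖c i n‖ ^ 2 ≤ 2 / (3 * Real.sqrt 3) * K1 β * v i ^ (3/2:ℝ) +
      (∑ j, (∫ x in (0:ℝ)..L, ‖∑ n, (starRingEnd ℂ) (c i n) * d n j x‖ ^ 2) +
        α ^ 2 * β * ∑ n, ‖c i n‖ ^ 2) := by
    intro i
    have hLp : 0 ≤ L := by rw [hL]; positivity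
    refine aux_scalar _ _ _ _ (aux_K1_pos β hβ) (hv0 i) ?_ fun s hs =>
      aux_A α β hα hβ L hL g d hg hd hgp hdp hortho (fun j => W j i) (hu i) y (c i) (fun n => rfl) s hs
    refine add_nonneg (Finset.sum_nonneg fun j _ => ?_) (by positivity)
    exact intervalIntegral.integral_nonneg hLp fun x _ => by positivity
  have hs := Finset.sum_le_sum (s := Finset.univ) fun i _ => key i
  rw [Finset.sum_add_distrib, Finset.sum_add_distrib, ← Finset.mul_sum, ← Finset.mul_sum] at hs
  have e1 : ∑ n, (∑ j, A.mulVec (fun j => g n j y) j * (starRingEnd ℂ) (g n j y)).re =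
      ∑ i, v i * ∑ n, ‖c i n‖ ^ 2 := by
    simp_rw [hQ, Finset.mul_sum]
    rw [Finset.sum_comm]
    refine Finset.sum_congr rfl fun n _ => ?_
    rw [Complex.re_sum]
    refine Finset.sum_congr rfl fun i _ => ?_
    rw [← Complex.ofReal_mul, Complex.ofReal_re]
  have e2 : ∑ n, (∑ j, g n j y * (starRingEnd ℂ) (g n j y)).re = ∑ i, ∑ n, ‖c i n‖ ^ 2 := by
    rw [Finset.sum_comm]
    refine Finset.sum_congr rfl fun n _ => ?_
    rw [Finset.sum_congr rfl fun j _ => mul_comm _ _, ← hP, Complex.re_sum]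
    refine Finset.sum_congr rfl fun i _ => ?_
    rw [Complex.conj_mul', ← Complex.ofReal_pow, Complex.ofReal_re]
  have e3 : (∑ m, ∑ n, (∑ j, (starRingEnd ℂ) (g m j y) * g n j y) *
        ∫ x in (0:ℝ)..L, ∑ j, d m j x * (starRingEnd ℂ) (d n j x)) =
      ((∑ i, ∑ j, (∫ x in (0:ℝ)..L, ‖∑ n, (starRingEnd ℂ) (c i n) * d n j x‖ ^ 2) : ℝ) : ℂ) := by
    rw [Complex.ofReal_sum]
    rw [Finset.sum_congr rfl fun i _ => aux_quad d hd (fun n => (starRingEnd ℂ) (c i n)) L]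
    symm
    rw [Finset.sum_comm]
    refine Finset.sum_congr rfl fun m _ => ?_
    rw [Finset.sum_comm]
    refine Finset.sum_congr rfl fun n _ => ?_
    rw [← Finset.sum_mul, ← hP]
    simp
  rw [e1, e2, e3, Complex.ofReal_re]
  exact hs

theorem aux_energy {M : ℕ} (L a : ℝ)
    (g d d2 : Fin M → ℝ → ℂ) (hg : ∀ j x, HasDerivAt (g j) (d j x) x)
    (hd : ∀ j x, HasDerivAt (d j) (d2 j x) x) (h2 : ∀ j, Continuous (d2 j))
    (hgp : ∀ j, Function.Periodic (g j) L) (hdp : ∀ j, Function.Periodic (d j) L)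
    (hn : (∫ x in (0:ℝ)..L, ∑ j, g j x * (starRingEnd ℂ) (g j x)) = 1)
    (A : ℝ → Matrix (Fin M) (Fin M) ℂ) 
    (heq : ∀ j x, (A x).mulVec (fun j => g j x) j = a * g j x - d2 j x) :
    (∫ x in (0:ℝ)..L, ∑ j, d j x * (starRingEnd ℂ) (d j x)) = 
    (∫ x in (0:ℝ)..L, ∑ j, (A x).mulVec (fun j => g j x) j * (starRingEnd ℂ) (g j x)) - a := by
  have hgc : ∀ j, Continuous (g j) := fun j =>
    continuous_iff_continuousAt.2 fun x => (hg j x).continuousAt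
  have hdc : ∀ j, Continuous (d j) := fun j =>
    continuous_iff_continuousAt.2 fun x => (hd j x).continuousAt
  have hgc' : ∀ j, Continuous (fun x => (starRingEnd ℂ) (g j x)) :=
    fun j => Complex.continuous_conj.comp (hgc j)
  have hdc' : ∀ j, Continuous (fun x => (starRingEnd ℂ) (d j x)) :=
    fun j => Complex.continuous_conj.comp (hdc j)
  have hder : ∀ x, HasDerivAt (fun x => ∑ j, d j x * (starRingEnd ℂ) (g j x))
      (∑ j, (d2 j x * (starRingEnd ℂ) (g j x) + d j x * (starRingEnd ℂ) (d j x))) x := by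
    intro x
    exact HasDerivAt.fun_sum fun j _ => (hd j x).mul ((hg j x).star)
  have hI := intervalIntegral.integral_eq_sub_of_hasDerivAt (a := 0) (b := L) (fun x _ => hder x)
    (Continuous.intervalIntegrable (by fun_prop) _ _)
  have hz : ∀ j, g j L = g j 0 := fun j => by simpa using hgp j 0
  have hz' : ∀ j, d j L = d j 0 := fun j => by simpa using hdp j 0
  simp only [hz, hz', sub_self] at hI
  have : (∫ x in (0:ℝ)..L, ∑ j, d j x * (starRingEnd ℂ) (d j x)) -
    (∫ x in (0:ℝ)..L, ∑ j, (A x).mulVec (fun j => g j x) j * (starRingEnd ℂ) (g j x)) +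
     a * (∫ x in (0:ℝ)..L, ∑ j, g j x * (starRingEnd ℂ) (g j x)) = 0 := by
    simp only [heq]
    rw [← intervalIntegral.integral_const_mul, ← intervalIntegral.integral_sub,
      ← intervalIntegral.integral_add, ← hI]
    · congr 1
      ext x
      rw [Finset.mul_sum, ← Finset.sum_sub_distrib, ← Finset.sum_add_distrib]
      refine Finset.sum_congr rfl fun j _ => ?_
      ring
    all_goals
      apply Continuous.intervalIntegrable
      fun_prop
  rw [hn] at this
  linear_combination this

theorem stmt_13 (α β : ℝ) (hα : 0 < α) (hβ : 0 < β) (L : ℝ) (hL : L = 2 * π / α)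
    (M N : ℕ) (hM : 1 ≤ M)
    (V : ℝ → Matrix (Fin M) (Fin M) ℂ) (hVc : Continuous V)
    (hVper : Function.Periodic V L) (hV : ∀ x, (V x).PosSemidef)
    (φ : Fin N → ℝ → Fin M → ℂ) (hφ : ∀ n, ContDiff ℝ 2 (φ n))
    (hper : ∀ n, Function.Periodic (φ n) L)
    (hortho : ∀ n m, (∫ x in (0:ℝ)..L, ∑ j, φ n x j * (starRingEnd ℂ) (φ m x j)) =
      if n = m then 1 else 0)
    (lam : Fin N → ℝ) (hlam : ∀ n, 0 < lam n)
    (heig : ∀ n x, -(deriv (deriv (φ n)) x) + (α ^ 2 * β) • φ n x - (V x).mulVec (φ n x) =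
      (-(lam n)) • φ n x) :
    ∑ n, lam n ≤ (2 / (3 * Real.sqrt 3)) * K1 β *
      ∫ x in (0:ℝ)..L, ∑ i, (hV x).1.eigenvalues i ^ (3 / 2 : ℝ) := by
  let g : Fin N → Fin M → ℝ → ℂ := fun n j x => φ n x j
  let d : Fin N → Fin M → ℝ → ℂ := fun n j x => deriv (φ n) x j
  let d2 : Fin N → Fin M → ℝ → ℂ := fun n j x => deriv (deriv (φ n)) x j
  have hLp : 0 ≤ L := by rw [hL]; positivity
  have hφ1 : ∀ n, ContDiff ℝ 1 (deriv (φ n)) := fun n =>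
    (contDiff_succ_iff_deriv (n := 1).1 (hφ n)).2.2
  have hφ2 : ∀ n, Continuous (deriv (deriv (φ n))) := fun n => (hφ1 n).continuous_deriv le_rfl
  have hg : ∀ n j x, HasDerivAt (g n j) (d n j x) x := fun n j x =>
    hasDerivAt_pi.1 (((hφ n).differentiable (by norm_num) x).hasDerivAt) j
  have hd : ∀ n j x, HasDerivAt (d n j) (d2 n j x) x := fun n j x =>
    hasDerivAt_pi.1 (((hφ1 n).differentiable (by norm_num) x).hasDerivAt) j
  have h2c : ∀ n j, Continuous (d2 n j) := fun n j => (continuous_apply j).comp (hφ2 n)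
  have hdc : ∀ n j, Continuous (d n j) := fun n j => (continuous_apply j).comp (hφ1 n).continuous
  have hgc : ∀ n j, Continuous (g n j) := fun n j => (continuous_apply j).comp (hφ n).continuous
  have hgc' : ∀ n j, Continuous (fun x => (starRingEnd ℂ) (g n j x)) :=
    fun n j => Complex.continuous_conj.comp (hgc n j)
  have hgp : ∀ n j, Function.Periodic (g n j) L := fun n j x => congrFun (hper n x) j
  have hdp : ∀ n j, Function.Periodic (d n j) L := by
    intro n j x
    have : deriv (φ n) (x + L) = deriv (φ n) x := by
      rw [← deriv_comp_add_const]
      congr 1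
      ext1 z
      exact hper n z
    exact congrFun this j
  have heq : ∀ n j x, (V x).mulVec (fun j => g n j x) j =
      ((α ^ 2 * β + lam n : ℝ) : ℂ) * g n j x - d2 n j x := by
    intro n j x
    have := congrFun (heig n x) j
    simp only [Pi.add_apply, Pi.sub_apply, Pi.neg_apply, Pi.smul_apply, Complex.real_smul] at this
    simp only [g, d2]
    push_cast at this ⊢
    linear_combination -this
  have hE := fun n => aux_energy L (α ^ 2 * β + lam n) (g n) (d n) (d2 n) (hg n) (hd n) (h2c n)
    (hgp n) (hdp n) (by simpa using hortho n n) V (heq n)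
  have hpt := fun y => aux_pt α β hα hβ L hL g d hg hdc hgp hdp hortho (V y) (hV y) y
  have hVg : ∀ n j, Continuous (fun x => (V x).mulVec (fun j => g n j x) j) := by
    intro n j
    simp only [heq]
    have := hgc n j
    have := h2c n j
    fun_prop
  have hcS := aux_cont V hVc hV
  set B : Fin N → Fin N → ℂ := fun m n => ∫ x in (0:ℝ)..L, ∑ j, d m j x * (starRingEnd ℂ) (d n j x)
    with hB
  let Q : Fin N → ℝ → ℂ := fun n x =>
    ∑ j, (V x).mulVec (fun j => g n j x) j * (starRingEnd ℂ) (g n j x)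
  let P : Fin N → Fin N → ℝ → ℂ := fun n m x => ∑ j, g n j x * (starRingEnd ℂ) (g m j x)
  have hQc : ∀ n, Continuous (Q n) := fun n => by simp only [Q]; fun_prop
  have hPc : ∀ n m, Continuous (P n m) := fun n m => by simp only [P]; fun_prop
  have hPi : ∀ n m, ∫ x in (0:ℝ)..L, P n m x = if n = m then 1 else 0 := hortho
  have re_int : ∀ f : ℝ → ℂ, Continuous f →
      ∫ x in (0:ℝ)..L, (f x).re = (∫ x in (0:ℝ)..L, f x).re := by
    intro f hf
    exact intervalIntegral.intervalIntegral_re (hf.intervalIntegrable _ _)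
  have hpt' : ∀ y, (∑ n, Q n y).re ≤
      2 / (3 * Real.sqrt 3) * K1 β * ∑ i, (hV y).1.eigenvalues i ^ (3/2:ℝ) +
      (∑ m, ∑ n, P n m y * B m n + ∑ n, ((α ^ 2 * β : ℝ) : ℂ) * P n n y).re := by
    intro y
    refine le_trans (le_of_eq ?_) ((hpt y).trans (le_of_eq ?_))
    · rw [Complex.re_sum]
    · congr 1
      rw [Complex.add_re]
      congr 1
      · simp only [P, hB, mul_comm]
      · rw [Complex.re_sum, Finset.mul_sum]
        refine Finset.sum_congr rfl fun n _ => ?_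
        rw [Complex.re_ofReal_mul]
  have hint := intervalIntegral.integral_mono_on (μ := volume) hLp
    (Continuous.intervalIntegrable (by fun_prop) _ _)
    (Continuous.intervalIntegrable (by fun_prop) _ _) (fun y _ => hpt' y)
  rw [intervalIntegral.integral_add (Continuous.intervalIntegrable (by fun_prop) _ _)
    (Continuous.intervalIntegrable (by fun_prop) _ _), intervalIntegral.integral_const_mul,
    re_int _ (by fun_prop), re_int _ (by fun_prop),
    intervalIntegral.integral_add (Continuous.intervalIntegrable (by fun_prop) _ _)
    (Continuous.intervalIntegrable (by fun_prop) _ _)] at hint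
  have i1 : ∫ x in (0:ℝ)..L, ∑ n, Q n x = ∑ n, ∫ x in (0:ℝ)..L, Q n x :=
    intervalIntegral.integral_finsetSum fun n _ => (hQc n).intervalIntegrable _ _
  have i2 : ∫ x in (0:ℝ)..L, ∑ m, ∑ n, P n m x * B m n = ∑ n, B n n := by
    rw [intervalIntegral.integral_finsetSum
      fun n _ => Continuous.intervalIntegrable (by fun_prop) _ _]
    refine Finset.sum_congr rfl fun m _ => ?_
    rw [intervalIntegral.integral_finsetSum
      fun n _ => Continuous.intervalIntegrable (by fun_prop) _ _]
    simp_rw [intervalIntegral.integral_mul_const, hPi]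
    simp
  have i3 : ∫ x in (0:ℝ)..L, ∑ n, ((α ^ 2 * β : ℝ) : ℂ) * P n n x =
      ∑ n : Fin N, ((α ^ 2 * β : ℝ) : ℂ) := by
    rw [intervalIntegral.integral_finsetSum
      fun n _ => Continuous.intervalIntegrable (by fun_prop) _ _]
    simp_rw [intervalIntegral.integral_const_mul, hPi]
    simp
  have hE' : ∀ n, B n n = (∫ x in (0:ℝ)..L, Q n x) - ((α ^ 2 * β + lam n : ℝ) : ℂ) := hE
  have i4 : ∑ n, B n n + ∑ n : Fin N, ((α ^ 2 * β : ℝ) : ℂ) =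
      (∑ n, ∫ x in (0:ℝ)..L, Q n x) - ((∑ n, lam n : ℝ) : ℂ) := by
    simp_rw [hE']
    rw [Finset.sum_sub_distrib]
    push_cast
    rw [Finset.sum_add_distrib]
    ring
  rw [i1, i2, i3, i4, Complex.sub_re, Complex.ofReal_re] at hint
  linarith
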